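/- For all real a, b > 0, I(a,b) = 1/2 if and only if a = b. -/

import Mathlib

/-- The Beta function `B(a,b) = ∫₀¹ t^(a-1) (1-t)^(b-1) dt`. -/
noncomputable def betaFn (a b : ℝ) : ℝ := ∫ t in (0:ℝ)..1, t ^ (a - 1) * (1 - t) ^ (b - 1)

/-- `I(a,b)`: the probability that a `Beta(a,b)` random variable is `≥ 1/2`. -/
noncomputable def I (a b : ℝ) : ℝ :=
  (1 / betaFn a b) * ∫ t in (1/2 : ℝ)..1, t ^ (a - 1) * (1 - t) ^ (b - 1)


theorem I_aux_int (a b : ℝ) (hb : 0 < b) :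
    IntervalIntegrable (fun t : ℝ => t ^ (a - 1) * (1 - t) ^ (b - 1)) MeasureTheory.volume (1/2) 1 := by
  have h1 : IntervalIntegrable (fun t : ℝ => t ^ (b - 1)) MeasureTheory.volume (1/2) 0 :=
    intervalIntegral.intervalIntegrable_rpow' (by linarith)
  have h2 : IntervalIntegrable (fun t : ℝ => (1 - t) ^ (b - 1)) MeasureTheory.volume (1/2) 1 := by
    have := h1.comp_sub_left 1
    norm_num at this
    simpa using this
  refine h2.continuousOn_mul ?_
  intro t ht
  rw [Set.uIcc_of_le (by norm_num)] at ht
  have : 0 < t := by linarith [ht.1]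
  exact (Real.continuousAt_rpow_const t _ (Or.inl this.ne')).continuousWithinAt

theorem I_aux_refl (a b : ℝ) :
    ∫ t in (0:ℝ)..(1/2), t ^ (a - 1) * (1 - t) ^ (b - 1)
      = ∫ t in (1/2:ℝ)..1, t ^ (b - 1) * (1 - t) ^ (a - 1) := by
  have := intervalIntegral.integral_comp_sub_left (a := 0) (b := 1/2)
    (fun t : ℝ => t ^ (b - 1) * (1 - t) ^ (a - 1)) 1
  norm_num at this
  norm_num
  rw [← this]
  congr 1
  ext t
  ring

theorem I_aux_int0 (a b : ℝ) (ha : 0 < a) :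
    IntervalIntegrable (fun t : ℝ => t ^ (a - 1) * (1 - t) ^ (b - 1)) MeasureTheory.volume 0 (1/2) := by
  have h := ((I_aux_int b a ha).comp_sub_left 1).symm
  norm_num at h
  norm_num
  refine h.congr ?_
  intro t _
  simp only
  ring

theorem I_aux_pos (a b : ℝ) (hb : 0 < b) :
    0 < ∫ t in (1/2:ℝ)..1, t ^ (a - 1) * (1 - t) ^ (b - 1) := by
  refine intervalIntegral.intervalIntegral_pos_of_pos_on (I_aux_int a b hb) ?_ (by norm_num)
  intro t ht
  have h1 : 0 < t := by linarith [ht.1]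
  have h2 : 0 < 1 - t := by linarith [ht.2]
  positivity

theorem I_aux_lt (a b : ℝ) (hb : 0 < b) (hab : b < a) :
    (∫ t in (1/2:ℝ)..1, t ^ (b - 1) * (1 - t) ^ (a - 1))
      < ∫ t in (1/2:ℝ)..1, t ^ (a - 1) * (1 - t) ^ (b - 1) := by
  rw [← sub_pos, ← intervalIntegral.integral_sub (I_aux_int a b hb)
    (I_aux_int b a (hb.trans hab))]
  refine intervalIntegral.intervalIntegral_pos_of_pos_on
    ((I_aux_int a b hb).sub (I_aux_int b a (hb.trans hab))) ?_ (by norm_num)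
  intro t ht
  have h1 : 0 < t := by linarith [ht.1]
  have h2 : 0 < 1 - t := by linarith [ht.2]
  have h3 : (1 - t) ^ (a - b) < t ^ (a - b) :=
    Real.rpow_lt_rpow h2.le (by linarith [ht.1]) (by linarith)
  have e1 : t ^ (a - 1) = t ^ (b - 1) * t ^ (a - b) := by
    rw [← Real.rpow_add h1]; congr 1; ring
  have e2 : (1 - t) ^ (a - 1) = (1 - t) ^ (b - 1) * (1 - t) ^ (a - b) := by
    rw [← Real.rpow_add h2]; congr 1; ring
  have h4 : 0 < t ^ (b - 1) * (1 - t) ^ (b - 1) := by positivity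
  simp only [e1, e2]
  nlinarith [mul_pos h4 (sub_pos.2 h3)]

theorem I_eq_half_iff (a b : ℝ) (ha : 0 < a) (hb : 0 < b) :
    I a b = 1 / 2 ↔ a = b := by
  have hB : betaFn a b = (∫ t in (1/2:ℝ)..1, t ^ (b - 1) * (1 - t) ^ (a - 1))
      + ∫ t in (1/2:ℝ)..1, t ^ (a - 1) * (1 - t) ^ (b - 1) := by
    rw [betaFn, ← I_aux_refl a b]
    exact (intervalIntegral.integral_add_adjacent_intervals (I_aux_int0 a b ha)
      (I_aux_int a b hb)).symm
  have p1 := I_aux_pos a b hb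
  have p2 := I_aux_pos b a ha
  have l1 := I_aux_lt a b hb
  have l2 := I_aux_lt b a ha
  rw [I, hB]
  constructor
  · intro h
    rw [one_div_mul_eq_div, div_eq_div_iff (by positivity) (by norm_num)] at h
    rcases lt_trichotomy a b with hab | hab | hab
    · have := l2 hab
      linarith
    · exact hab
    · have := l1 hab
      linarith
  · rintro rfl
    rw [one_div_mul_eq_div, div_eq_div_iff (by positivity) (by norm_num)]
    ring
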